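/- arXiv:2511.03708 — 4 statements merged into one kernel-verified Lean document; each statement's English description precedes it below -/
import Mathlib

section
/- Fix integers 1 ≤ s ≤ z and a real t ≥ 1. Then (1/binom(z,s)²)·Σ_{S, S'} t^{|S ∩ S'|} ≤ exp( (s²/z)·(t − 1) ), where the sum runs over all ordered pairs (S, S') of s-element subsets of {1, …, z}. Equivalently, if S and S' are independent uniformly random s-element subsets of {1, …, z} and L = |S ∩ S'|, then E[t^L] ≤ exp( (s²/z)·(t − 1) ). -/
/-!
For a fixed set `A` of size `r`, expand `t ^ |A ∩ S| = ∑ B ⊆ A ∩ S, (t - 1) ^ |B|` and average over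
`S`: a given `B` lies in a uniformly random `s`-subset of a `z`-set with probability at most
`(s / z) ^ |B|`, the value when points are kept independently with probability `s / z`. Since the
coefficients `(t - 1) ^ |B|` are nonnegative, the average is at most `(1 + (s / z) * (t - 1)) ^ r`,
and `1 + x ≤ exp x` finishes the proof.
-/

section

open Finset

variable {α : Type*} [DecidableEq α]

theorem descFactorial_mul_pow_le_descFactorial_mul_pow {m n : ℕ} (h : m ≤ n) (k : ℕ) :
    m.descFactorial k * n ^ k ≤ n.descFactorial k * m ^ k := by
  induction k with
  | zero => simp
  | succ k ih =>
    have factor_le : (m - k) * n ≤ (n - k) * m := by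
      rw [Nat.sub_mul, Nat.sub_mul, mul_comm n m]
      gcongr
    calc m.descFactorial (k + 1) * n ^ (k + 1)
        = ((m - k) * n) * (m.descFactorial k * n ^ k) := by
          rw [Nat.descFactorial_succ]; ring
      _ ≤ ((n - k) * m) * (n.descFactorial k * m ^ k) := by gcongr
      _ = n.descFactorial (k + 1) * m ^ (k + 1) := by
          rw [Nat.descFactorial_succ]; ring

theorem choose_mul_pow_le_choose_mul_pow {m n : ℕ} (h : m ≤ n) (k : ℕ) :
    m.choose k * n ^ k ≤ n.choose k * m ^ k := by
  refine Nat.le_of_mul_le_mul_left ?_ k.factorial_pos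
  simpa only [Nat.descFactorial_eq_factorial_mul_choose, mul_assoc] using
    descFactorial_mul_pow_le_descFactorial_mul_pow h k

theorem card_filter_superset_powersetCard_mul_choose {B U : Finset α} (hB : B ⊆ U) (s : ℕ) :
    #{S ∈ U.powersetCard s | B ⊆ S} * (#U).choose #B = (#U).choose s * s.choose #B := by
  rcases le_or_gt #B s with hBs | hsB
  · rw [card_filter_powersetCard_subset B U s hB hBs, Nat.choose_mul hBs, mul_comm]
  · have no_superset : {S ∈ U.powersetCard s | B ⊆ S} = ∅ :=
      filter_eq_empty_iff.2 fun S hS hBS =>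
        hsB.not_ge ((card_le_card hBS).trans_eq (mem_powersetCard.1 hS).2)
    rw [no_superset, card_empty, Nat.choose_eq_zero_of_lt hsB, zero_mul, mul_zero]

theorem card_filter_superset_powersetCard_mul_pow_le {B U : Finset α} (hB : B ⊆ U) {s : ℕ}
    (hs : s ≤ #U) :
    #{S ∈ U.powersetCard s | B ⊆ S} * #U ^ #B ≤ (#U).choose s * s ^ #B := by
  refine Nat.le_of_mul_le_mul_right ?_ (Nat.choose_pos (card_le_card hB))
  calc #{S ∈ U.powersetCard s | B ⊆ S} * #U ^ #B * (#U).choose #B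
      = (#U).choose s * (s.choose #B * #U ^ #B) := by
        rw [mul_right_comm, card_filter_superset_powersetCard_mul_choose hB, mul_assoc]
    _ ≤ (#U).choose s * ((#U).choose #B * s ^ #B) := by
        exact Nat.mul_le_mul_left _ (choose_mul_pow_le_choose_mul_pow hs #B)
    _ = (#U).choose s * s ^ #B * (#U).choose #B := by ring

theorem sum_pow_card_inter {R : Type*} [CommRing R] (𝒮 : Finset (Finset α)) (A : Finset α)
    (t : R) :
    ∑ S ∈ 𝒮, t ^ #(A ∩ S) = ∑ B ∈ A.powerset, #{S ∈ 𝒮 | B ⊆ S} * (t - 1) ^ #B := by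
  have expand (C : Finset α) : t ^ #C = ∑ B ∈ C.powerset, (t - 1) ^ #B := by
    simpa using (sum_pow_mul_eq_add_pow (t - 1) 1 C).symm
  calc ∑ S ∈ 𝒮, t ^ #(A ∩ S)
      = ∑ S ∈ 𝒮, ∑ B ∈ (A ∩ S).powerset, (t - 1) ^ #B := by simp only [expand]
    _ = ∑ B ∈ A.powerset, ∑ S ∈ 𝒮 with B ⊆ S, (t - 1) ^ #B :=
        sum_comm' fun S B => by simp only [mem_powerset, subset_inter_iff, mem_filter]; tauto
    _ = ∑ B ∈ A.powerset, #{S ∈ 𝒮 | B ⊆ S} * (t - 1) ^ #B := by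
        simp only [sum_const, nsmul_eq_mul]

theorem sum_powersetCard_pow_card_inter_le {A U : Finset α} (hU : U.Nonempty) (hA : A ⊆ U) {s : ℕ}
    (hs : s ≤ #U) {t : ℝ} (ht : 1 ≤ t) :
    ∑ S ∈ U.powersetCard s, t ^ #(A ∩ S) ≤ (#U).choose s * (s / #U * (t - 1) + 1) ^ #A := by
  have card_superset_le {B : Finset α} (hB : B ⊆ A) :
      (#{S ∈ U.powersetCard s | B ⊆ S} : ℝ) ≤ (#U).choose s * (s / #U) ^ #B := by
    have card_pow_pos : (0 : ℝ) < #U ^ #B := pow_pos (Nat.cast_pos.2 hU.card_pos) _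
    rw [div_pow, ← mul_div_assoc, le_div_iff₀ card_pow_pos]
    exact_mod_cast card_filter_superset_powersetCard_mul_pow_le (hB.trans hA) hs
  have : 0 ≤ t - 1 := sub_nonneg.2 ht
  calc ∑ S ∈ U.powersetCard s, t ^ #(A ∩ S)
      = ∑ B ∈ A.powerset, #{S ∈ U.powersetCard s | B ⊆ S} * (t - 1) ^ #B :=
        sum_pow_card_inter _ A t
    _ ≤ ∑ B ∈ A.powerset, (#U).choose s * (s / #U) ^ #B * (t - 1) ^ #B := by
        gcongr with B hB
        exact card_superset_le (mem_powerset.1 hB)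
    _ = (#U).choose s * ∑ B ∈ A.powerset, (s / #U * (t - 1)) ^ #B := by
        simp only [mul_sum, mul_pow, mul_assoc]
    _ = (#U).choose s * (s / #U * (t - 1) + 1) ^ #A := by
        rw [← sum_pow_mul_eq_add_pow]
        simp only [one_pow, mul_one]

theorem sum_powersetCard_pow_card_inter_le_exp {A U : Finset α} (hU : U.Nonempty) (hA : A ⊆ U)
    {s : ℕ} (hs : s ≤ #U) {t : ℝ} (ht : 1 ≤ t) :
    ∑ S ∈ U.powersetCard s, t ^ #(A ∩ S) ≤
      (#U).choose s * Real.exp (#A * s / #U * (t - 1)) := by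
  have : 0 ≤ t - 1 := sub_nonneg.2 ht
  calc ∑ S ∈ U.powersetCard s, t ^ #(A ∩ S)
      ≤ (#U).choose s * (s / #U * (t - 1) + 1) ^ #A :=
        sum_powersetCard_pow_card_inter_le hU hA hs ht
    _ ≤ (#U).choose s * Real.exp (s / #U * (t - 1)) ^ #A := by
        gcongr
        exact Real.add_one_le_exp _
    _ = (#U).choose s * Real.exp (#A * s / #U * (t - 1)) := by
        rw [← Real.exp_nat_mul, ← mul_assoc, ← mul_div_assoc]

theorem stmt15_general {U : Finset α} (hU : U.Nonempty) {r s : ℕ} (hr : r ≤ #U) (hs : s ≤ #U)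
    {t : ℝ} (ht : 1 ≤ t) :
    (1 / ((#U).choose r * (#U).choose s : ℝ)) *
      ∑ S ∈ U.powersetCard r, ∑ S' ∈ U.powersetCard s, t ^ #(S ∩ S')
    ≤ Real.exp (r * s / #U * (t - 1)) := by
  have choose_pos {k : ℕ} (hk : k ≤ #U) : (0 : ℝ) < (#U).choose k :=
    Nat.cast_pos.2 (Nat.choose_pos hk)
  rw [one_div, inv_mul_le_iff₀ (mul_pos (choose_pos hr) (choose_pos hs))]
  calc ∑ S ∈ U.powersetCard r, ∑ S' ∈ U.powersetCard s, t ^ #(S ∩ S')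
      ≤ ∑ _ ∈ U.powersetCard r, (#U).choose s * Real.exp (r * s / #U * (t - 1)) := by
        gcongr with _ hS
        obtain ⟨hSU, rfl⟩ := mem_powersetCard.1 hS
        exact sum_powersetCard_pow_card_inter_le_exp hU hSU hs ht
    _ = (#U).choose r * (#U).choose s * Real.exp (r * s / #U * (t - 1)) := by
        rw [sum_const, card_powersetCard, nsmul_eq_mul, mul_assoc]

end

theorem stmt15 (z s : ℕ) (hs : 1 ≤ s) (hsz : s ≤ z) (t : ℝ) (ht : 1 ≤ t) :
    (1 / (z.choose s : ℝ) ^ 2) *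
      ∑ S ∈ (Finset.range z).powersetCard s, ∑ S' ∈ (Finset.range z).powersetCard s,
        t ^ (S ∩ S').card
    ≤ Real.exp ((s ^ 2 / z) * (t - 1)) := by
  have range_nonempty : (Finset.range z).Nonempty := Finset.nonempty_range_iff.2 (by omega)
  have s_le_card : s ≤ (Finset.range z).card := by rwa [Finset.card_range]
  simpa only [Finset.card_range, ← sq] using stmt15_general range_nonempty s_le_card s_le_card ht
end

section
/- Fix integers n ≥ 1, z ≥ 1, 1 ≤ s ≤ z and a real δ ∈ (0,1/2). If 4nδ²/z ≤ 1 and n²s²δ⁴/z³ ≤ 1/32, then χ²(Q, P_0) ≤ 32·n²·s²·δ⁴/z³. -/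
/-- Heads/tails probability of coin `i` under the alternative model with biased set `S`
and signs `σ` (with `σ i = true` meaning sign +1): a toss of coin `i` comes up `y`. -/
noncomputable def pCoin (z : ℕ) (δ : ℝ) (S : Finset (Fin z)) (σ : Fin z → Bool)
    (i : Fin z) (y : Bool) : ℝ :=
  if y then 1 / 2 + (if σ i then δ else -δ) * (if i ∈ S then 1 else 0)
  else 1 / 2 - (if σ i then δ else -δ) * (if i ∈ S then 1 else 0)

/-- Null model: each round an independent uniform coin is tossed, all coins fair. -/
noncomputable def Pnull (n z : ℕ) (_ω : Fin n → Fin z × Bool) : ℝ :=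
  ∏ _t : Fin n, (1 / (z : ℝ)) * (1 / 2)

/-- Law of the data under a fixed biased set `S` and signs `σ`. -/
noncomputable def PAlt (n z : ℕ) (δ : ℝ) (S : Finset (Fin z)) (σ : Fin z → Bool)
    (ω : Fin n → Fin z × Bool) : ℝ :=
  ∏ t : Fin n, (1 / (z : ℝ)) * pCoin z δ S σ (ω t).1 (ω t).2

/-- Uniform mixture of `PAlt` over all size-`s` subsets `S` and all sign vectors `σ`. -/
noncomputable def Qmix (n z s : ℕ) (δ : ℝ) (ω : Fin n → Fin z × Bool) : ℝ :=
  (1 / (z.choose s : ℝ)) * (1 / 2 ^ z) *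
    ∑ S ∈ (Finset.univ : Finset (Fin z)).powersetCard s,
      ∑ σ : Fin z → Bool, PAlt n z δ S σ ω

/-
By the Ingster–Suslina identity, `1 + χ²(Q, P₀)` is the average over two independent parameters
`(S, σ)`, `(S', σ')` of `∑ ω, P_{S,σ}(ω) P_{S',σ'}(ω) / P₀(ω)`. Rounds are independent, so this
correlation is the `n`-th power of `1 + (4δ²/z) ∑_{i ∈ S ∩ S'} σᵢ σ'ᵢ`. With `1 + x ≤ eˣ`,
averaging over the signs `σ` gives at most `cosh (4nδ²/z) ^ |S ∩ S'|`. The size of `S ∩ S'` is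
hypergeometric, and a `t`-element set is contained in `S` with probability at most `(s/z)ᵗ`, as if
its points were chosen independently; expanding the power over subsets gives
`1 + χ² ≤ exp ((s²/z) (cosh b - 1))` with `b = 4nδ²/z`. For `b ≤ 1` and small exponent,
`cosh b - 1 ≤ b²` and `eᵘ - 1 ≤ 2u` turn this into the stated bound.
-/

open Finset Real
open scoped BigOperators

lemma exp_le_one_add_self_add_sq {x : ℝ} (hx : |x| ≤ 1) : exp x ≤ 1 + x + x ^ 2 := by
  linarith [le_of_abs_le (abs_exp_sub_one_sub_id_le hx)]

lemma cosh_le_one_add_sq {x : ℝ} (hx : |x| ≤ 1) : cosh x ≤ 1 + x ^ 2 := by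
  rw [cosh_eq]
  linarith [exp_le_one_add_self_add_sq hx, exp_le_one_add_self_add_sq ((abs_neg x).trans_le hx)]

lemma exp_le_one_add_two_mul {x : ℝ} (hx0 : 0 ≤ x) (hx1 : x ≤ 1) : exp x ≤ 1 + 2 * x := by
  nlinarith [exp_le_one_add_self_add_sq ((abs_of_nonneg hx0).trans_le hx1)]

section ChiSquare

variable {Ω Θ : Type*} [Fintype Ω]

/-- The chi-squared divergence of `q` from `p`, for functions on a finite space. It is meant for
nowhere vanishing `p`: a point with `p ω = 0` contributes `0`. -/
noncomputable def chiSqDiv (q p : Ω → ℝ) : ℝ :=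
  ∑ ω, (q ω - p ω) ^ 2 / p ω

lemma chiSqDiv_eq_sum_sq_div_sub_one {q p : Ω → ℝ} (hp : ∀ ω, p ω ≠ 0)
    (hp_sum : ∑ ω, p ω = 1) (hq_sum : ∑ ω, q ω = 1) :
    chiSqDiv q p = ∑ ω, q ω ^ 2 / p ω - 1 := by
  have expand (ω : Ω) : (q ω - p ω) ^ 2 / p ω = q ω ^ 2 / p ω - 2 * q ω + p ω := by
    field_simp [hp ω]
    ring
  simp only [chiSqDiv, expand, sum_add_distrib, sum_sub_distrib, ← mul_sum, hp_sum, hq_sum]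
  ring

lemma chiSqDiv_expect_eq {A : Finset Θ} (hA : A.Nonempty) {P : Θ → Ω → ℝ} {p : Ω → ℝ}
    (hp : ∀ ω, p ω ≠ 0) (hp_sum : ∑ ω, p ω = 1) (hP_sum : ∀ θ ∈ A, ∑ ω, P θ ω = 1) :
    chiSqDiv (fun ω ↦ 𝔼 θ ∈ A, P θ ω) p =
      𝔼 θ' ∈ A, 𝔼 θ ∈ A, ∑ ω, P θ ω * P θ' ω / p ω - 1 := by
  have mixture_sum : ∑ ω, 𝔼 θ ∈ A, P θ ω = 1 := by
    rw [← expect_sum_comm, expect_congr rfl hP_sum, expect_const hA]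
  rw [chiSqDiv_eq_sum_sq_div_sub_one hp hp_sum mixture_sum]
  simp only [expect_sum_comm, sq, expect_mul_expect, expect_div]
  congr! 2 with ω
  exact expect_comm ..

lemma sum_prod_mul_prod_div_prod {α K : Type*} [Fintype α] [Semifield K] (n : ℕ)
    (f g p : α → K) :
    ∑ ω : Fin n → α, (∏ t, f (ω t)) * (∏ t, g (ω t)) / ∏ t, p (ω t) =
      (∑ a, f a * g a / p a) ^ n := by
  simp only [Fintype.sum_pow, prod_div_distrib, prod_mul_distrib]

end ChiSquare

section Signs

variable {ι : Type*}

/-- The sign `±1` encoded by a Boolean, with `true` standing for `+1`. Under the uniform average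
over `ι → Bool`, the values `boolSign (σ i)` are independent Rademacher variables. -/
def boolSign (b : Bool) : ℝ := if b then 1 else -1

lemma abs_boolSign (b : Bool) : |boolSign b| = 1 := by
  cases b <;> simp [boolSign]

lemma cosh_mul_boolSign (x : ℝ) (b : Bool) : cosh (x * boolSign b) = cosh x := by
  cases b <;> simp [boolSign]

lemma expect_exp_mul_boolSign (x : ℝ) : 𝔼 b, exp (x * boolSign b) = cosh x := by
  rw [Fintype.expect_eq_sum_div_card, Fintype.sum_bool, Fintype.card_bool, cosh_eq]
  simp [boolSign]

lemma expect_pi_prod [Fintype ι] [DecidableEq ι] {κ : ι → Type*} [∀ i, Fintype (κ i)]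
    {K : Type*} [Semifield K] [CharZero K] (f : ∀ i, κ i → K) :
    𝔼 x : ∀ i, κ i, ∏ i, f i (x i) = ∏ i, 𝔼 j, f i j := by
  simp only [Fintype.expect_eq_sum_div_card, prod_div_distrib, Fintype.prod_sum,
    Fintype.card_pi, Nat.cast_prod]

lemma expect_exp_sum_mul_boolSign [Fintype ι] [DecidableEq ι] (U : Finset ι) (a : ι → ℝ) :
    𝔼 σ : ι → Bool, exp (∑ i ∈ U, a i * boolSign (σ i)) = ∏ i ∈ U, cosh (a i) := by
  have extend (σ : ι → Bool) : exp (∑ i ∈ U, a i * boolSign (σ i)) =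
      ∏ i, exp ((if i ∈ U then a i else 0) * boolSign (σ i)) := by
    simp only [← exp_sum, ite_mul, zero_mul, sum_ite_mem, univ_inter]
  simp only [extend, expect_pi_prod (fun i b ↦ exp ((if i ∈ U then a i else 0) * boolSign b)),
    expect_exp_mul_boolSign, apply_ite cosh, cosh_zero, prod_ite_mem, univ_inter]

lemma expect_one_add_sum_mul_boolSign_pow_le [Fintype ι] [DecidableEq ι] (n : ℕ)
    {U : Finset ι} {a : ι → ℝ} (ha : ∑ i ∈ U, |a i| ≤ 1) :
    𝔼 σ : ι → Bool, (1 + ∑ i ∈ U, a i * boolSign (σ i)) ^ n ≤ ∏ i ∈ U, cosh (n * a i) := by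
  rw [← expect_exp_sum_mul_boolSign]
  refine expect_le_expect fun σ _ ↦ ?_
  have abs_sum_le : |∑ i ∈ U, a i * boolSign (σ i)| ≤ 1 :=
    (abs_sum_le_sum_abs _ _).trans (by simpa only [abs_mul, abs_boolSign, mul_one] using ha)
  calc (1 + ∑ i ∈ U, a i * boolSign (σ i)) ^ n
      ≤ exp (∑ i ∈ U, a i * boolSign (σ i)) ^ n := by
        gcongr
        · linarith [neg_le_of_abs_le abs_sum_le]
        · rw [add_comm]
          exact add_one_le_exp _
    _ = exp (∑ i ∈ U, n * a i * boolSign (σ i)) := by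
        simp only [← exp_nat_mul, mul_sum, mul_assoc]

end Signs

section Subsets

lemma descFactorial_mul_pow_le_pow_mul_descFactorial {s z : ℕ} (hsz : s ≤ z) (t : ℕ) :
    s.descFactorial t * z ^ t ≤ s ^ t * z.descFactorial t := by
  induction t with
  | zero => simp
  | succ t ih =>
    have factor_le : (s - t) * z ≤ s * (z - t) := by
      rw [Nat.sub_mul, Nat.mul_sub, Nat.mul_comm s t]
      gcongr
    calc s.descFactorial (t + 1) * z ^ (t + 1)
        = ((s - t) * z) * (s.descFactorial t * z ^ t) := by
          rw [Nat.descFactorial_succ]; ring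
      _ ≤ (s * (z - t)) * (s ^ t * z.descFactorial t) := Nat.mul_le_mul factor_le ih
      _ = s ^ (t + 1) * z.descFactorial (t + 1) := by
          rw [Nat.descFactorial_succ]; ring

lemma choose_sub_sub_mul_pow_le_pow_mul_choose {t s z : ℕ} (hts : t ≤ s) (hsz : s ≤ z) :
    (z - t).choose (s - t) * z ^ t ≤ s ^ t * z.choose s := by
  have desc_pos : 0 < z.descFactorial t := Nat.descFactorial_pos.2 (hts.trans hsz)
  have exchange : z.choose s * s.descFactorial t =
      z.descFactorial t * (z - t).choose (s - t) := by
    rw [Nat.descFactorial_eq_factorial_mul_choose, Nat.descFactorial_eq_factorial_mul_choose,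
      Nat.mul_left_comm, Nat.choose_mul hts, Nat.mul_assoc]
  refine Nat.le_of_mul_le_mul_left ?_ desc_pos
  calc z.descFactorial t * ((z - t).choose (s - t) * z ^ t)
      = z.choose s * (s.descFactorial t * z ^ t) := by
        rw [← Nat.mul_assoc, ← exchange, Nat.mul_assoc]
    _ ≤ z.choose s * (s ^ t * z.descFactorial t) :=
        Nat.mul_le_mul_left _ (descFactorial_mul_pow_le_pow_mul_descFactorial hsz t)
    _ = z.descFactorial t * (s ^ t * z.choose s) := by ring

variable {ι : Type*} [Fintype ι] [DecidableEq ι]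

lemma expect_ite_subset_powersetCard_le [Nonempty ι] (s : ℕ) (T : Finset ι) :
    𝔼 S ∈ powersetCard s univ, (if T ⊆ S then 1 else 0 : ℝ) ≤
      (s / Fintype.card ι : ℝ) ^ #T := by
  rw [expect_eq_sum_div_card, sum_boole, card_powersetCard, card_univ, div_pow]
  by_cases h : #T ≤ s ∧ s ≤ Fintype.card ι
  · obtain ⟨hTs, hsz⟩ := h
    have choose_pos : (0 : ℝ) < (Fintype.card ι).choose s := by
      exact_mod_cast Nat.choose_pos hsz
    rw [card_filter_powersetCard_subset T univ s (subset_univ T) hTs, card_univ,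
      div_le_div_iff₀ choose_pos (by positivity)]
    exact_mod_cast choose_sub_sub_mul_pow_le_pow_mul_choose hTs hsz
  · have no_superset : {S ∈ powersetCard s (univ : Finset ι) | T ⊆ S} = ∅ := by
      refine filter_eq_empty_iff.2 fun S hS hTS ↦ h ?_
      rw [← (mem_powersetCard.1 hS).2]
      exact ⟨card_le_card hTS, card_le_univ S⟩
    rw [no_superset, card_empty, Nat.cast_zero, zero_div]
    positivity

lemma expect_prod_inter_one_add_le [Nonempty ι] (s : ℕ) (U : Finset ι) {θ : ι → ℝ}
    (hθ : ∀ i, 0 ≤ θ i) :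
    𝔼 S ∈ powersetCard s univ, ∏ i ∈ S ∩ U, (1 + θ i) ≤
      ∏ i ∈ U, (1 + s / Fintype.card ι * θ i) := by
  have expand (S : Finset ι) : ∏ i ∈ S ∩ U, (1 + θ i) =
      ∑ T ∈ U.powerset, (∏ i ∈ T, θ i) * (if T ⊆ S then 1 else 0) := by
    have powerset_inter_eq : (S ∩ U).powerset = {T ∈ U.powerset | T ⊆ S} := by
      ext T
      simp only [mem_powerset, mem_filter, subset_inter_iff, and_comm]
    simp only [prod_one_add, powerset_inter_eq, sum_filter, mul_ite, mul_one, mul_zero]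
  simp only [expand, expect_sum_comm, ← mul_expect, prod_one_add, prod_mul_distrib, prod_const]
  refine sum_le_sum fun T _ ↦ ?_
  rw [mul_comm]
  gcongr
  · exact prod_nonneg fun i _ ↦ hθ i
  · exact expect_ite_subset_powersetCard_le s T

end Subsets

section Coins

variable {n z s : ℕ} {δ : ℝ}

/-- The law of one round under the alternative: the coin, chosen uniformly, and its outcome. -/
noncomputable def tossLaw (z : ℕ) (δ : ℝ) (S : Finset (Fin z)) (σ : Fin z → Bool)
    (x : Fin z × Bool) : ℝ :=
  1 / z * pCoin z δ S σ x.1 x.2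

lemma pCoin_eq (S : Finset (Fin z)) (σ : Fin z → Bool) (i : Fin z) (y : Bool) :
    pCoin z δ S σ i y =
      1 / 2 + (if i ∈ S then δ else 0) * boolSign (σ i) * boolSign y := by
  unfold pCoin boolSign
  split_ifs <;> ring

lemma sum_tossLaw (hz : z ≠ 0) (S : Finset (Fin z)) (σ : Fin z → Bool) :
    ∑ x, tossLaw z δ S σ x = 1 := by
  have coin (i : Fin z) : ∑ y, tossLaw z δ S σ (i, y) = 1 / z := by
    simp only [tossLaw, pCoin_eq, Fintype.sum_bool, boolSign, if_true, Bool.false_eq_true,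
      if_false]
    ring
  rw [Fintype.sum_prod_type]
  simp only [coin]
  simp [hz]

lemma sum_tossLaw_mul_tossLaw_div (hz : z ≠ 0) (S S' : Finset (Fin z)) (σ σ' : Fin z → Bool) :
    ∑ x, tossLaw z δ S σ x * tossLaw z δ S' σ' x / (1 / z * (1 / 2)) =
      1 + ∑ i ∈ S ∩ S', 4 * δ ^ 2 / z * boolSign (σ' i) * boolSign (σ i) := by
  have coin (i : Fin z) :
      ∑ y, tossLaw z δ S σ (i, y) * tossLaw z δ S' σ' (i, y) / (1 / z * (1 / 2)) =
        1 / z + if i ∈ S ∩ S' then 4 * δ ^ 2 / z * boolSign (σ' i) * boolSign (σ i) else 0 := by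
    simp only [tossLaw, pCoin_eq, Fintype.sum_bool, mem_inter, ite_and]
    generalize boolSign (σ i) = ε, boolSign (σ' i) = ε'
    simp only [boolSign, if_true, Bool.false_eq_true, if_false]
    split_ifs <;> field_simp <;> ring
  rw [Fintype.sum_prod_type]
  simp only [coin, sum_add_distrib, sum_ite_mem, univ_inter]
  simp [hz]

lemma sum_PAlt (hz : z ≠ 0) (S : Finset (Fin z)) (σ : Fin z → Bool) :
    ∑ ω, PAlt n z δ S σ ω = 1 := by
  calc ∑ ω, PAlt n z δ S σ ω = (∑ x, tossLaw z δ S σ x) ^ n :=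
        (Fintype.sum_pow (tossLaw z δ S σ) n).symm
    _ = 1 := by rw [sum_tossLaw hz, one_pow]

lemma Pnull_pos (hz : z ≠ 0) (ω : Fin n → Fin z × Bool) : 0 < Pnull n z ω := by
  unfold Pnull
  positivity

lemma sum_Pnull (hz : z ≠ 0) : ∑ ω, Pnull n z ω = 1 := by
  have round_sum : ∑ _x : Fin z × Bool, 1 / (z : ℝ) * (1 / 2) = 1 := by
    simp [field]
  calc ∑ ω, Pnull n z ω = (∑ _x : Fin z × Bool, 1 / (z : ℝ) * (1 / 2)) ^ n :=
        (Fintype.sum_pow (fun _ : Fin z × Bool ↦ 1 / (z : ℝ) * (1 / 2)) n).symm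
    _ = 1 := by rw [round_sum, one_pow]

lemma Qmix_eq_expect : Qmix n z s δ =
    fun ω ↦ 𝔼 θ ∈ powersetCard s univ ×ˢ univ, PAlt n z δ θ.1 θ.2 ω := by
  funext ω
  simp only [Qmix, expect_eq_sum_div_card, sum_product, card_product, card_powersetCard, card_univ,
    Fintype.card_fin, Fintype.card_fun, Fintype.card_bool, Nat.cast_mul, Nat.cast_pow,
    Nat.cast_ofNat]
  ring

lemma sum_PAlt_mul_PAlt_div_Pnull (hz : z ≠ 0) (S S' : Finset (Fin z)) (σ σ' : Fin z → Bool) :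
    ∑ ω, PAlt n z δ S σ ω * PAlt n z δ S' σ' ω / Pnull n z ω =
      (1 + ∑ i ∈ S ∩ S', 4 * δ ^ 2 / z * boolSign (σ' i) * boolSign (σ i)) ^ n := by
  rw [← sum_tossLaw_mul_tossLaw_div hz]
  exact sum_prod_mul_prod_div_prod n (tossLaw z δ S σ) (tossLaw z δ S' σ')
    fun _ ↦ 1 / z * (1 / 2)

lemma expect_signs_correlation_le (hz : z ≠ 0) (hδ : |δ| ≤ 1 / 2) (S S' : Finset (Fin z))
    (σ' : Fin z → Bool) :
    𝔼 σ, ∑ ω, PAlt n z δ S σ ω * PAlt n z δ S' σ' ω / Pnull n z ω ≤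
      cosh (4 * n * δ ^ 2 / z) ^ #(S ∩ S') := by
  simp only [sum_PAlt_mul_PAlt_div_Pnull hz]
  have weights_le : ∑ i ∈ S ∩ S', |4 * δ ^ 2 / z * boolSign (σ' i)| ≤ 1 := by
    have card_le : (#(S ∩ S') : ℝ) ≤ z := by
      exact_mod_cast (card_le_univ _).trans_eq (Fintype.card_fin z)
    have sq_le : 4 * δ ^ 2 ≤ 1 := by nlinarith [sq_abs δ, abs_nonneg δ]
    calc ∑ i ∈ S ∩ S', |4 * δ ^ 2 / z * boolSign (σ' i)|
        = #(S ∩ S') / z * (4 * δ ^ 2) := by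
          have weight_nonneg : 0 ≤ 4 * δ ^ 2 / z := by positivity
          simp only [abs_mul, abs_boolSign, mul_one, abs_of_nonneg weight_nonneg, sum_const,
            nsmul_eq_mul]
          ring
      _ ≤ 1 := mul_le_one₀ (div_le_one_of_le₀ card_le z.cast_nonneg) (by positivity) sq_le
  refine (expect_one_add_sum_mul_boolSign_pow_le n weights_le).trans_eq ?_
  refine prod_eq_pow_card fun i _ ↦ ?_
  rw [← mul_assoc, cosh_mul_boolSign]
  ring_nf

lemma expect_correlation_le (hz : z ≠ 0) (hδ : |δ| ≤ 1 / 2) {S' : Finset (Fin z)}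
    (hS' : #S' = s) (σ' : Fin z → Bool) :
    𝔼 θ ∈ powersetCard s univ ×ˢ univ,
        ∑ ω, PAlt n z δ θ.1 θ.2 ω * PAlt n z δ S' σ' ω / Pnull n z ω ≤
      exp (s ^ 2 / z * (cosh (4 * n * δ ^ 2 / z) - 1)) := by
  have : NeZero z := ⟨hz⟩
  set c := cosh (4 * n * δ ^ 2 / z)
  have excess_nonneg : 0 ≤ c - 1 := sub_nonneg.2 (one_le_cosh _)
  rw [expect_product]
  calc 𝔼 S ∈ powersetCard s univ, 𝔼 σ,
        ∑ ω, PAlt n z δ S σ ω * PAlt n z δ S' σ' ω / Pnull n z ω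
      ≤ 𝔼 S ∈ powersetCard s univ, c ^ #(S ∩ S') :=
        expect_le_expect fun S _ ↦ expect_signs_correlation_le hz hδ S S' σ'
    _ ≤ (1 + s / z * (c - 1)) ^ s := by
        simpa only [Fintype.card_fin, prod_const, hS', add_sub_cancel] using
          expect_prod_inter_one_add_le s S' fun _ ↦ excess_nonneg
    _ ≤ exp (s / z * (c - 1)) ^ s := by
        gcongr
        rw [add_comm]
        exact add_one_le_exp _
    _ = exp (s ^ 2 / z * (c - 1)) := by
        rw [← exp_nat_mul]
        ring_nf

theorem chiSqDiv_Qmix_Pnull_le (hz : z ≠ 0) (hsz : s ≤ z) (hδ : |δ| ≤ 1 / 2) :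
    chiSqDiv (Qmix n z s δ) (Pnull n z) ≤
      exp (s ^ 2 / z * (cosh (4 * n * δ ^ 2 / z) - 1)) - 1 := by
  have params_nonempty :
      (powersetCard s (univ : Finset (Fin z)) ×ˢ (univ : Finset (Fin z → Bool))).Nonempty :=
    (powersetCard_nonempty.2 (by simpa using hsz)).product univ_nonempty
  rw [Qmix_eq_expect, chiSqDiv_expect_eq params_nonempty (fun ω ↦ (Pnull_pos hz ω).ne')
    (sum_Pnull hz) fun θ _ ↦ sum_PAlt hz θ.1 θ.2]
  gcongr
  refine expect_le params_nonempty fun θ' hθ' ↦ ?_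
  exact expect_correlation_le hz hδ (mem_powersetCard.1 (mem_product.1 hθ').1).2 θ'.2

end Coins

theorem stmt16 (n z s : ℕ) (hn : 1 ≤ n) (hz : 1 ≤ z) (hs : 1 ≤ s) (hsz : s ≤ z)
    (δ : ℝ) (hδ0 : 0 < δ) (hδ : δ < 1 / 2)
    (h1 : 4 * n * δ ^ 2 / z ≤ 1)
    (h2 : (n : ℝ) ^ 2 * s ^ 2 * δ ^ 4 / z ^ 3 ≤ 1 / 32) :
    ∑ ω : Fin n → Fin z × Bool,
        (Qmix n z s δ ω - Pnull n z ω) ^ 2 / Pnull n z ω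
      ≤ 32 * n ^ 2 * s ^ 2 * δ ^ 4 / z ^ 3 := by
  set b : ℝ := 4 * n * δ ^ 2 / z with hb
  have b_nonneg : 0 ≤ b := by positivity
  have cosh_sub_one_le : cosh b - 1 ≤ b ^ 2 :=
    sub_le_iff_le_add'.2 (cosh_le_one_add_sq ((abs_of_nonneg b_nonneg).trans_le h1))
  have exponent_eq : s ^ 2 / z * b ^ 2 = 16 * (n ^ 2 * s ^ 2 * δ ^ 4 / z ^ 3) := by
    rw [hb]
    ring
  calc chiSqDiv (Qmix n z s δ) (Pnull n z)
      ≤ exp (s ^ 2 / z * (cosh b - 1)) - 1 :=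
        chiSqDiv_Qmix_Pnull_le (by lia) hsz ((abs_of_pos hδ0).trans_le hδ.le)
    _ ≤ exp (s ^ 2 / z * b ^ 2) - 1 := by gcongr
    _ ≤ 2 * (s ^ 2 / z * b ^ 2) :=
        sub_le_iff_le_add'.2 (exp_le_one_add_two_mul (by positivity) (by linarith))
    _ = 32 * n ^ 2 * s ^ 2 * δ ^ 4 / z ^ 3 := by
        rw [exponent_eq]
        ring
end

section
/- Let d ≥ 1 be an integer, β ∈ (0,1], L > 0, w > 0 and q ∈ ℝ^d. Define D_φ = min(4^{−β}·L, 1/4) and ξ(x) = D_φ·w^{−β}·φ( w·‖x − q‖_∞ )^β for x ∈ ℝ^d. Then ξ is (β, L)-Hölder with respect to the Euclidean norm: for all x, y ∈ ℝ^d, |ξ(x) − ξ(y)| ≤ L·‖x − y‖_2^β. Moreover, ξ takes values in [0, D_φ·w^{−β}], equals D_φ·w^{−β} on the set { x : w·‖x − q‖_∞ < 1/4 }, and vanishes on the set { x : w·‖x − q‖_∞ ≥ 1/2 }. -/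
/-- The bump function φ: φ(r) = 1 for r < 1/4, φ(r) = 2 − 4r for 1/4 ≤ r < 1/2,
φ(r) = 0 for r ≥ 1/2. -/
noncomputable def bump (r : ℝ) : ℝ :=
  if r < 1 / 4 then 1 else if r < 1 / 2 then 2 - 4 * r else 0

/-- D_φ = min(4^{−β}·L, 1/4). -/
noncomputable def Dphi (β L : ℝ) : ℝ := min ((4 : ℝ) ^ (-β) * L) (1 / 4)

/-- ξ(x) = D_φ · w^{−β} · φ(w·‖x − q‖_∞)^β, where ‖·‖_∞ is the sup norm of coordinates. -/
noncomputable def xiFun (d : ℕ) (β L w : ℝ) (q : EuclideanSpace ℝ (Fin d))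
    (x : EuclideanSpace ℝ (Fin d)) : ℝ :=
  Dphi β L * w ^ (-β) * (bump (w * ⨆ i, |x i - q i|)) ^ β

/-!
The bump `φ` is `4`-Lipschitz, and `t ↦ t ^ β` is subadditive, hence `(β, 1)`-Hölder, on `[0, ∞)`.
So `r ↦ φ(w r)^β` is `(β, (4 w)^β)`-Hölder; the amplitude `D_φ w^{-β}` cancels `w^β`, and
`4^β D_φ ≤ L`. Composing with a `1`-Lipschitz function such as `x ↦ ‖x - q‖_∞`, which is
`1`-Lipschitz even for the Euclidean distance, keeps the Hölder constant.
-/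

theorem bump_eq_max_min (r : ℝ) : bump r = max 0 (min 1 (2 - 4 * r)) := by
  unfold bump
  grind

theorem bump_mem_Icc (r : ℝ) : bump r ∈ Set.Icc 0 1 := by
  rw [bump_eq_max_min]
  exact ⟨le_max_left _ _, max_le zero_le_one (min_le_left _ _)⟩

theorem lipschitzWith_bump : LipschitzWith 4 bump := by
  have affine : LipschitzWith 4 fun r : ℝ => 2 - 4 * r :=
    LipschitzWith.of_dist_le_mul fun r s => by
      rw [Real.dist_eq, Real.dist_eq, sub_sub_sub_cancel_left, ← mul_sub, abs_mul,
        abs_sub_comm s]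
      norm_num
  simpa only [← bump_eq_max_min] using (affine.const_min 1).const_max 0

theorem abs_rpow_sub_rpow_le {a b β : ℝ} (ha : 0 ≤ a) (hb : 0 ≤ b) (hβ0 : 0 ≤ β)
    (hβ1 : β ≤ 1) : |a ^ β - b ^ β| ≤ |a - b| ^ β := by
  wlog hba : b ≤ a generalizing a b
  · simpa only [abs_sub_comm] using this hb ha (le_of_not_ge hba)
  have subadditive : (a - b + b) ^ β ≤ (a - b) ^ β + b ^ β :=
    Real.rpow_add_le_add_rpow (sub_nonneg.2 hba) hb hβ0 hβ1
  rw [sub_add_cancel] at subadditive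
  rw [abs_of_nonneg (sub_nonneg.2 hba),
    abs_of_nonneg (sub_nonneg.2 (Real.rpow_le_rpow hb hba hβ0))]
  exact sub_le_iff_le_add.2 subadditive

section Profile

/-- The radial profile `r ↦ A w^{-β} φ(w r)^β` of `ξ`, with an arbitrary amplitude `A` in place
of `D_φ`; `xiFun` is this profile evaluated at `‖x - q‖_∞`. -/
noncomputable def bumpProfile (β A w r : ℝ) : ℝ :=
  A * w ^ (-β) * bump (w * r) ^ β

variable {β A w r : ℝ}

theorem bumpProfile_eq_of_mul_lt (h : w * r < 1 / 4) : bumpProfile β A w r = A * w ^ (-β) := by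
  simp only [bumpProfile, bump, if_pos h, Real.one_rpow, mul_one]

theorem bumpProfile_eq_zero_of_le_mul (hβ : β ≠ 0) (h : 1 / 2 ≤ w * r) :
    bumpProfile β A w r = 0 := by
  have hbump : bump (w * r) = 0 := by
    rw [bump_eq_max_min]
    exact max_eq_left ((min_le_right _ _).trans (by linarith))
  rw [bumpProfile, hbump, Real.zero_rpow hβ, mul_zero]

theorem bumpProfile_mem_Icc (hβ : 0 ≤ β) (hA : 0 ≤ A) (hw : 0 ≤ w) (r : ℝ) :
    bumpProfile β A w r ∈ Set.Icc 0 (A * w ^ (-β)) := by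
  obtain ⟨bump_nonneg, bump_le_one⟩ := bump_mem_Icc (w * r)
  have amplitude_nonneg : 0 ≤ A * w ^ (-β) := by positivity
  exact ⟨mul_nonneg amplitude_nonneg (Real.rpow_nonneg bump_nonneg β),
    mul_le_of_le_one_right amplitude_nonneg (Real.rpow_le_one bump_nonneg bump_le_one hβ)⟩

theorem abs_bump_rpow_sub_bump_rpow_le (hβ0 : 0 ≤ β) (hβ1 : β ≤ 1) (hw : 0 ≤ w) (r s : ℝ) :
    |bump (w * r) ^ β - bump (w * s) ^ β| ≤ 4 ^ β * (w ^ β * |r - s| ^ β) := by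
  have lipschitz : |bump (w * r) - bump (w * s)| ≤ 4 * (w * |r - s|) := by
    simpa [Real.dist_eq, ← mul_sub, abs_mul, abs_of_nonneg hw] using
      lipschitzWith_bump.dist_le_mul (w * r) (w * s)
  calc |bump (w * r) ^ β - bump (w * s) ^ β|
      ≤ |bump (w * r) - bump (w * s)| ^ β :=
        abs_rpow_sub_rpow_le (bump_mem_Icc _).1 (bump_mem_Icc _).1 hβ0 hβ1
    _ ≤ (4 * (w * |r - s|)) ^ β := by gcongr
    _ = 4 ^ β * (w ^ β * |r - s| ^ β) := by
        rw [Real.mul_rpow (by positivity) (by positivity), Real.mul_rpow hw (abs_nonneg _)]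

theorem abs_bumpProfile_sub_le (hβ0 : 0 ≤ β) (hβ1 : β ≤ 1) (hA : 0 ≤ A) (hw : 0 < w)
    (r s : ℝ) : |bumpProfile β A w r - bumpProfile β A w s| ≤ 4 ^ β * A * |r - s| ^ β := by
  calc |bumpProfile β A w r - bumpProfile β A w s|
      = A * w ^ (-β) * |bump (w * r) ^ β - bump (w * s) ^ β| := by
        rw [bumpProfile, bumpProfile, ← mul_sub, abs_mul, abs_of_nonneg (by positivity)]
    _ ≤ A * w ^ (-β) * (4 ^ β * (w ^ β * |r - s| ^ β)) := by
        gcongr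
        exact abs_bump_rpow_sub_bump_rpow_le hβ0 hβ1 hw.le r s
    _ = 4 ^ β * A * |r - s| ^ β := by
        rw [Real.rpow_neg hw.le]
        field_simp

end Profile

theorem Dphi_nonneg (β : ℝ) {L : ℝ} (hL : 0 ≤ L) : 0 ≤ Dphi β L :=
  le_min (by positivity) (by norm_num)

theorem four_rpow_mul_Dphi_le (β L : ℝ) : 4 ^ β * Dphi β L ≤ L := by
  calc (4 : ℝ) ^ β * Dphi β L ≤ 4 ^ β * (4 ^ (-β) * L) := by
        gcongr
        exact min_le_left _ _
    _ = L := by rw [Real.rpow_neg (by norm_num), mul_inv_cancel_left₀ (by positivity)]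

theorem iSup_abs_sub_eq_dist_ofLp {ι : Type*} [Fintype ι] (x q : EuclideanSpace ℝ ι) :
    ⨆ i, |x i - q i| = dist (WithLp.ofLp x) (WithLp.ofLp q) := by
  rw [dist_eq_norm, ← PiLp.norm_toLp, PiLp.norm_eq_ciSup]
  rfl

theorem lipschitzWith_iSup_abs_sub {ι : Type*} [Fintype ι] (q : EuclideanSpace ℝ ι) :
    LipschitzWith 1 fun x : EuclideanSpace ℝ ι => ⨆ i, |x i - q i| := by
  simpa only [iSup_abs_sub_eq_dist_ofLp, mul_one, Function.comp_def] using
    (LipschitzWith.dist_left (WithLp.ofLp q)).comp (PiLp.lipschitzWith_ofLp 2 fun _ : ι => ℝ)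

theorem stmt18_general {X : Type*} [PseudoMetricSpace X] {ρ : X → ℝ} (hρ : LipschitzWith 1 ρ)
    {β L w : ℝ} (hβ0 : 0 < β) (hβ1 : β ≤ 1) (hL : 0 ≤ L) (hw : 0 < w) :
    (∀ x y, |bumpProfile β (Dphi β L) w (ρ x) - bumpProfile β (Dphi β L) w (ρ y)| ≤
      L * dist x y ^ β) ∧
    (∀ x, bumpProfile β (Dphi β L) w (ρ x) ∈ Set.Icc 0 (Dphi β L * w ^ (-β))) ∧
    (∀ x, w * ρ x < 1 / 4 → bumpProfile β (Dphi β L) w (ρ x) = Dphi β L * w ^ (-β)) ∧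
    (∀ x, 1 / 2 ≤ w * ρ x → bumpProfile β (Dphi β L) w (ρ x) = 0) := by
  have hD : 0 ≤ Dphi β L := Dphi_nonneg β hL
  refine ⟨fun x y => ?_, fun x => bumpProfile_mem_Icc hβ0.le hD hw.le _,
    fun x => bumpProfile_eq_of_mul_lt, fun x => bumpProfile_eq_zero_of_le_mul hβ0.ne'⟩
  have hxy : |ρ x - ρ y| ≤ dist x y := by
    simpa only [Real.dist_eq, NNReal.coe_one, one_mul] using hρ.dist_le_mul x y
  calc |bumpProfile β (Dphi β L) w (ρ x) - bumpProfile β (Dphi β L) w (ρ y)|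
      ≤ 4 ^ β * Dphi β L * |ρ x - ρ y| ^ β := abs_bumpProfile_sub_le hβ0.le hβ1 hD hw _ _
    _ ≤ L * dist x y ^ β := by
        gcongr
        exact four_rpow_mul_Dphi_le β L

theorem stmt18 (d : ℕ) (hd : 1 ≤ d) (β L w : ℝ) (hβ0 : 0 < β) (hβ1 : β ≤ 1)
    (hL : 0 < L) (hw : 0 < w) (q : EuclideanSpace ℝ (Fin d)) :
    (∀ x y : EuclideanSpace ℝ (Fin d),
      |xiFun d β L w q x - xiFun d β L w q y| ≤ L * ‖x - y‖ ^ β) ∧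
    (∀ x : EuclideanSpace ℝ (Fin d),
      xiFun d β L w q x ∈ Set.Icc (0 : ℝ) (Dphi β L * w ^ (-β))) ∧
    (∀ x : EuclideanSpace ℝ (Fin d),
      w * (⨆ i, |x i - q i|) < 1 / 4 → xiFun d β L w q x = Dphi β L * w ^ (-β)) ∧
    (∀ x : EuclideanSpace ℝ (Fin d),
      1 / 2 ≤ w * (⨆ i, |x i - q i|) → xiFun d β L w q x = 0) := by
  simpa only [dist_eq_norm] using!
    stmt18_general (lipschitzWith_iSup_abs_sub q) hβ0 hβ1 hL.le hw
end

section
/- For every integer M ≥ 2, the function h_M(γ) = (1−γ)/(1−γ^M) is strictly decreasing and strictly convex on the interval (0,1). -/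
/-!
Write `h x = (1 - x) / (1 - x ^ p)` with `p > 1` real. The sign of `h'` on `(0, 1)` is that of
`p x ^ (p - 1) - 1 - (p - 1) x ^ p`, which is negative by Bernoulli's inequality for `1 / x`.
The sign of `h''` is that of `Q x = (p - 1) (1 - x ^ (p + 1)) - (p + 1) (x - x ^ p)`. Here
`Q 1 = 0`, and `Q'` is `p + 1` times the numerator of `h'`, so `Q` decreases to `0` and is positive
on `(0, 1)`.
-/

section

open Set

variable {p x : ℝ}

theorem mul_rpow_sub_one_lt (hp : 1 < p) (hx : 0 < x) (hx1 : x ≠ 1) :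
    p * x ^ (p - 1) < 1 + (p - 1) * x ^ p := by
  have bernoulli : 1 + p * (x⁻¹ - 1) < x⁻¹ ^ p := by
    simpa only [add_sub_cancel] using one_add_mul_self_lt_rpow_one_add
      (show -1 ≤ x⁻¹ - 1 by linarith [inv_pos.2 hx]) (sub_ne_zero.2 (inv_ne_one.2 hx1)) hp
  have scaled := mul_lt_mul_of_pos_left bernoulli (Real.rpow_pos_of_pos hx p)
  rw [← Real.mul_rpow hx.le (inv_nonneg.2 hx.le), mul_inv_cancel₀ hx.ne', Real.one_rpow] at scaled
  rw [Real.rpow_sub_one hx.ne', div_eq_mul_inv]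
  linarith

theorem mul_sub_rpow_lt_mul_one_sub_rpow (hp : 1 < p) (hx : x ∈ Ioo 0 1) :
    (p + 1) * (x - x ^ p) < (p - 1) * (1 - x ^ (p + 1)) := by
  let Q : ℝ → ℝ := fun t ↦ (p - 1) * (1 - t ^ (p + 1)) - (p + 1) * (t - t ^ p)
  have hasDerivAt_Q {t : ℝ} (ht : 0 < t) :
      HasDerivAt Q ((p + 1) * (p * t ^ (p - 1) - (1 + (p - 1) * t ^ p))) t := by
    have h := (((Real.hasDerivAt_rpow_const (p := p + 1) (.inl ht.ne')).const_sub 1).const_mul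
      (p - 1)).sub (((hasDerivAt_id t).sub
        (Real.hasDerivAt_rpow_const (p := p) (.inl ht.ne'))).const_mul (p + 1))
    refine h.congr_deriv ?_
    rw [add_sub_cancel_right]
    ring
  have strictAntiOn_Q : StrictAntiOn Q (Ioc 0 1) := by
    refine strictAntiOn_of_deriv_neg (convex_Ioc 0 1)
      (fun t ht ↦ (hasDerivAt_Q ht.1).continuousAt.continuousWithinAt) fun t ht ↦ ?_
    rw [interior_Ioc] at ht
    rw [(hasDerivAt_Q ht.1).deriv]
    exact mul_neg_of_pos_of_neg (by linarith)
      (sub_neg.2 (mul_rpow_sub_one_lt hp ht.1 ht.2.ne))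
  have Q_one : Q 1 = 0 := by simp [Q]
  exact sub_pos.1 (Q_one ▸ strictAntiOn_Q ⟨hx.1, hx.2.le⟩ ⟨one_pos, le_rfl⟩ hx.2)

theorem hasDerivAt_one_sub_div_one_sub_rpow (hx : 0 < x) (hxp : x ^ p ≠ 1) :
    HasDerivAt (fun t : ℝ ↦ (1 - t) / (1 - t ^ p))
      ((p * x ^ (p - 1) - (1 + (p - 1) * x ^ p)) / (1 - x ^ p) ^ 2) x := by
  have h := ((hasDerivAt_id x).const_sub 1).div
    ((Real.hasDerivAt_rpow_const (p := p) (.inl hx.ne')).const_sub 1) (sub_ne_zero.2 hxp.symm)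
  refine h.congr_deriv ?_
  rw [Real.rpow_sub_one hx.ne']
  simp only [id]
  field_simp
  ring

theorem hasDerivAt_deriv_one_sub_div_one_sub_rpow (hx : 0 < x) (hxp : x ^ p ≠ 1) :
    HasDerivAt (deriv fun t : ℝ ↦ (1 - t) / (1 - t ^ p))
      (p * x ^ (p - 2) * ((p - 1) * (1 - x ^ (p + 1)) - (p + 1) * (x - x ^ p)) /
        (1 - x ^ p) ^ 3) x := by
  have deriv_eq : (deriv fun t : ℝ ↦ (1 - t) / (1 - t ^ p)) =ᶠ[nhds x]
      fun t ↦ (p * t ^ (p - 1) - (1 + (p - 1) * t ^ p)) / (1 - t ^ p) ^ 2 := by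
    filter_upwards [lt_mem_nhds hx, (Real.continuousAt_rpow_const x p (.inl hx.ne')).eventually_ne
      hxp] with t ht htp using (hasDerivAt_one_sub_div_one_sub_rpow ht htp).deriv
  have hne : 1 - x ^ p ≠ 0 := sub_ne_zero.2 hxp.symm
  have hasDerivAt_rpow (q : ℝ) := Real.hasDerivAt_rpow_const (p := q) (.inl hx.ne')
  have h := (((hasDerivAt_rpow (p - 1)).const_mul p).sub
    (((hasDerivAt_rpow p).const_mul (p - 1)).const_add 1)).div
    (((hasDerivAt_rpow p).const_sub 1).pow 2) (pow_ne_zero 2 hne)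
  refine (h.congr_deriv ?_).congr_of_eventuallyEq deriv_eq
  simp only [Pi.sub_apply, Pi.pow_apply]
  rw [show p - 2 = p - 1 - 1 by ring, Real.rpow_sub_one hx.ne' (p - 1),
    Real.rpow_sub_one hx.ne' p, Real.rpow_add_one hx.ne' p]
  field_simp
  ring

theorem stmt19_general (p : ℝ) (hp : 1 < p) :
    StrictAntiOn (fun γ : ℝ ↦ (1 - γ) / (1 - γ ^ p)) (Ico 0 1) ∧
    StrictConvexOn ℝ (Ico 0 1) (fun γ : ℝ ↦ (1 - γ) / (1 - γ ^ p)) := by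
  have hp0 : 0 < p := one_pos.trans hp
  have rpow_lt_one {t : ℝ} (ht : t ∈ Ico 0 1) : t ^ p < 1 := Real.rpow_lt_one ht.1 ht.2 hp0
  have hcont : ContinuousOn (fun γ : ℝ ↦ (1 - γ) / (1 - γ ^ p)) (Ico 0 1) :=
    (continuous_const.sub continuous_id).continuousOn.div
      (continuous_const.sub (Real.continuous_rpow_const hp0.le)).continuousOn
      fun t ht ↦ (sub_pos.2 (rpow_lt_one ht)).ne'
  constructor
  · refine strictAntiOn_of_deriv_neg (convex_Ico 0 1) hcont fun t ht ↦ ?_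
    have htp := rpow_lt_one (interior_subset ht)
    rw [interior_Ico] at ht
    rw [(hasDerivAt_one_sub_div_one_sub_rpow ht.1 htp.ne).deriv]
    exact div_neg_of_neg_of_pos (sub_neg.2 (mul_rpow_sub_one_lt hp ht.1 ht.2.ne))
      (pow_pos (sub_pos.2 htp) 2)
  · refine strictConvexOn_of_deriv2_pos (convex_Ico 0 1) hcont fun t ht ↦ ?_
    have htp := rpow_lt_one (interior_subset ht)
    rw [interior_Ico] at ht
    have hpow := Real.rpow_pos_of_pos ht.1 (p - 2)
    rw [Function.iterate_succ_apply, Function.iterate_one,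
      (hasDerivAt_deriv_one_sub_div_one_sub_rpow ht.1 htp.ne).deriv]
    exact div_pos (mul_pos (mul_pos hp0 hpow)
      (sub_pos.2 (mul_sub_rpow_lt_mul_one_sub_rpow hp ht))) (pow_pos (sub_pos.2 htp) 3)

end

theorem stmt19 (M : ℕ) (hM2 : 2 ≤ M) :
    StrictAntiOn (fun γ : ℝ => (1 - γ) / (1 - γ ^ M)) (Set.Ioo (0 : ℝ) 1) ∧
    StrictConvexOn ℝ (Set.Ioo (0 : ℝ) 1) (fun γ : ℝ => (1 - γ) / (1 - γ ^ M)) := by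
  have h := stmt19_general M (Nat.one_lt_cast.2 hM2)
  simp only [Real.rpow_natCast] at h
  exact ⟨h.1.mono Set.Ioo_subset_Ico_self, h.2.subset Set.Ioo_subset_Ico_self (convex_Ioo 0 1)⟩
end
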